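/- arXiv:1301.6862 — 2 statements merged into one kernel-verified Lean document; each statement's English description precedes it below -/
import Mathlib

section
/- Given any twelve real numbers v₁,…,v₁₂ satisfying the compatibility relation 4(v₂+v₈) − 5(v₁+v₃+v₇+v₉) = 4(v₅+v₁₁) − 5(v₄+v₆+v₁₀+v₁₂), there exists exactly one φ in the space P̂ = P₃ ⊕ span{x³y − xy³} such that φ(gⱼ) = vⱼ for j = 1,…,12, where g₁,…,g₁₂ are the twelve Gauss points of the square [−1,1]². -/
/-!
The space of admissible `φ` has dimension `11`, so it suffices to show that the eleven coefficients
can be solved for explicitly in terms of the twelve values.  Writing `φ = ∑ aᵢⱼ xⁱ yʲ + c (x³y - xy³)`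
(`exists_eq_cubic` supplies the coefficients of the cubic part) and splitting each edge into the part
even and the part odd in the edge parameter decouples the system:

* the second differences along the edges, `v(s) + v(-s) - 2 v(0) = 2 s² · (⋯)`, give
  `a₂₀ ± a₂₁` and `a₀₂ ± a₁₂`;
* the midpoint values give `a₀₀ + a₀₂`, `a₀₀ + a₂₀`, `a₀₁ + a₀₃` and `a₁₀ + a₃₀`; here `a₀₀` is
  determined twice, and the compatibility relation says precisely that both values agree;
* the slopes `(v(s) - v(-s)) / (2 s)` give `a₁₀ + s² a₃₀ + a₁₂`, `a₀₁ + s² a₀₃ + a₂₁` and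
  `a₁₁ ± (1 - s²) c`.

As `s² = 3/5` differs from `0` and `1`, every unknown is determined.  Uniqueness is the homogeneous
case (`coeffs_eq_zero`); existence uses the resulting formulas for the coefficients.
-/

open MvPolynomial

noncomputable def s : ℝ := Real.sqrt (3 / 5)

/-- The twelve Gauss points of the reference square `[-1,1]²`. -/
noncomputable def g : Fin 12 → ℝ × ℝ :=
  ![(-s, -1), (0, -1), (s, -1),
    (1, -s), (1, 0), (1, s),
    (s, 1), (0, 1), (-s, 1),
    (-1, s), (-1, 0), (-1, -s)]

/-- The general cubic, with `aij` the coefficient of `xⁱ yʲ`. -/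
noncomputable def cubic (a00 a10 a01 a20 a11 a02 a30 a21 a12 a03 : ℝ) : MvPolynomial (Fin 2) ℝ :=
  C a00 * X 0 ^ 0 * X 1 ^ 0 + C a10 * X 0 ^ 1 * X 1 ^ 0 + C a01 * X 0 ^ 0 * X 1 ^ 1
    + C a20 * X 0 ^ 2 * X 1 ^ 0 + C a11 * X 0 ^ 1 * X 1 ^ 1 + C a02 * X 0 ^ 0 * X 1 ^ 2
    + C a30 * X 0 ^ 3 * X 1 ^ 0 + C a21 * X 0 ^ 2 * X 1 ^ 1 + C a12 * X 0 ^ 1 * X 1 ^ 2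
    + C a03 * X 0 ^ 0 * X 1 ^ 3

lemma totalDegree_term_le (a : ℝ) (i j : ℕ) (h : i + j ≤ 3) :
    (C a * X 0 ^ i * X 1 ^ j : MvPolynomial (Fin 2) ℝ).totalDegree ≤ 3 := by
  have h1 := totalDegree_mul (C a * X 0 ^ i : MvPolynomial (Fin 2) ℝ) (X 1 ^ j)
  have h2 := totalDegree_mul (C a : MvPolynomial (Fin 2) ℝ) (X 0 ^ i)
  rw [totalDegree_X_pow] at h1 h2
  rw [totalDegree_C] at h2
  omega

lemma totalDegree_cubic_le (a00 a10 a01 a20 a11 a02 a30 a21 a12 a03 : ℝ) :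
    (cubic a00 a10 a01 a20 a11 a02 a30 a21 a12 a03).totalDegree ≤ 3 := by
  have key (a : ℝ) (i j : ℕ) (h : i + j ≤ 3) :
      (C a * X 0 ^ i * X 1 ^ j : MvPolynomial (Fin 2) ℝ) ∈ restrictTotalDegree (Fin 2) ℝ 3 :=
    (mem_restrictTotalDegree _ _ _).2 (totalDegree_term_le a i j h)
  rw [← mem_restrictTotalDegree]
  unfold cubic
  repeat' apply Submodule.add_mem
  all_goals exact key _ _ _ (by norm_num)

lemma cubic_add (a00 a10 a01 a20 a11 a02 a30 a21 a12 a03 b00 b10 b01 b20 b11 b02 b30 b21 b12 b03 : ℝ) :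
    cubic a00 a10 a01 a20 a11 a02 a30 a21 a12 a03 + cubic b00 b10 b01 b20 b11 b02 b30 b21 b12 b03
      = cubic (a00 + b00) (a10 + b10) (a01 + b01) (a20 + b20) (a11 + b11) (a02 + b02)
          (a30 + b30) (a21 + b21) (a12 + b12) (a03 + b03) := by
  simp only [cubic, C_add]
  ring

lemma exists_eq_cubic (p : MvPolynomial (Fin 2) ℝ) (hp : p.totalDegree ≤ 3) :
    ∃ a00 a10 a01 a20 a11 a02 a30 a21 a12 a03 : ℝ,
      p = cubic a00 a10 a01 a20 a11 a02 a30 a21 a12 a03 := by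
  rw [p.as_sum]
  refine Finset.sum_induction _ (fun q => ∃ a00 a10 a01 a20 a11 a02 a30 a21 a12 a03 : ℝ,
      q = cubic a00 a10 a01 a20 a11 a02 a30 a21 a12 a03) ?_ ?_ ?_
  · rintro _ _ ⟨a00, a10, a01, a20, a11, a02, a30, a21, a12, a03, rfl⟩
      ⟨b00, b10, b01, b20, b11, b02, b30, b21, b12, b03, rfl⟩
    exact ⟨_, _, _, _, _, _, _, _, _, _, cubic_add ..⟩
  · exact ⟨0, 0, 0, 0, 0, 0, 0, 0, 0, 0, by simp [cubic]⟩
  · intro d hd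
    have hdeg : d 0 + d 1 ≤ 3 := by
      have := (le_totalDegree hd).trans hp
      rwa [Finsupp.sum_fintype _ _ (fun _ => rfl), Fin.sum_univ_two] at this
    rw [monomial_eq, Finsupp.prod_fintype _ _ (fun _ => pow_zero _), Fin.prod_univ_two]
    generalize coeff d p = a
    generalize d 0 = i at *
    generalize d 1 = j at *
    -- The monomial `a xⁱ yʲ` is the cubic with the single coefficient `a` in position `(i, j)`.
    let e (k l : ℕ) : ℝ := if i = k ∧ j = l then a else 0
    refine ⟨e 0 0, e 1 0, e 0 1, e 2 0, e 1 1, e 0 2, e 3 0, e 2 1, e 1 2, e 0 3, ?_⟩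
    have hi : i ≤ 3 := by omega
    have hj : j ≤ 3 := by omega
    simp only [e]
    clear e
    interval_cases i <;> interval_cases j <;> first | omega | simp [cubic, mul_assoc]

lemma eval_cubic_add (a00 a10 a01 a20 a11 a02 a30 a21 a12 a03 c x y : ℝ) :
    eval ![x, y] (cubic a00 a10 a01 a20 a11 a02 a30 a21 a12 a03
        + C c * (X 0 ^ 3 * X 1 - X 0 * X 1 ^ 3))
      = a00 + a10 * x + a01 * y + a20 * x ^ 2 + a11 * (x * y) + a02 * y ^ 2
        + a30 * x ^ 3 + a21 * (x ^ 2 * y) + a12 * (x * y ^ 2) + a03 * y ^ 3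
        + c * (x ^ 3 * y - x * y ^ 3) := by
  simp [cubic]
  ring

lemma s_sq : s ^ 2 = 3 / 5 := Real.sq_sqrt (by norm_num)

lemma s_ne_zero : s ≠ 0 := (Real.sqrt_pos.2 (by norm_num)).ne'

lemma s_cube : s ^ 3 = 3 / 5 * s := by rw [pow_succ, s_sq]

/-- An element of the space vanishing at all twelve Gauss points is zero. -/
lemma coeffs_eq_zero (a00 a10 a01 a20 a11 a02 a30 a21 a12 a03 c : ℝ)
    (h : ∀ j : Fin 12, eval ![(g j).1, (g j).2] (cubic a00 a10 a01 a20 a11 a02 a30 a21 a12 a03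
        + C c * (X 0 ^ 3 * X 1 - X 0 * X 1 ^ 3)) = 0) :
    cubic a00 a10 a01 a20 a11 a02 a30 a21 a12 a03
      + C c * (X 0 ^ 3 * X 1 - X 0 * X 1 ^ 3) = 0 := by
  simp only [eval_cubic_add] at h
  have h0 := h 0
  have h1 := h 1
  have h2 := h 2
  have h3 := h 3
  have h4 := h 4
  have h5 := h 5
  have h6 := h 6
  have h7 := h 7
  have h8 := h 8
  have h9 := h 9
  have h10 := h 10
  have h11 := h 11
  simp [g] at h0 h1 h2 h3 h4 h5 h6 h7 h8 h9 h10 h11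
  ring_nf at h0 h1 h2 h3 h4 h5 h6 h7 h8 h9 h10 h11
  simp only [s_cube, s_sq] at h0 h1 h2 h3 h4 h5 h6 h7 h8 h9 h10 h11
  -- The slopes along the bottom, top, right and left edges.
  have eB : a10 + 3 / 5 * a30 + a12 - a11 + 2 / 5 * c = 0 :=
    (mul_eq_zero.1 (by linarith : s * (a10 + 3 / 5 * a30 + a12 - a11 + 2 / 5 * c) = 0)).resolve_left
      s_ne_zero
  have eT : a10 + 3 / 5 * a30 + a12 + a11 - 2 / 5 * c = 0 :=
    (mul_eq_zero.1 (by linarith : s * (a10 + 3 / 5 * a30 + a12 + a11 - 2 / 5 * c) = 0)).resolve_left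
      s_ne_zero
  have eR : a01 + 3 / 5 * a03 + a21 + a11 + 2 / 5 * c = 0 :=
    (mul_eq_zero.1 (by linarith : s * (a01 + 3 / 5 * a03 + a21 + a11 + 2 / 5 * c) = 0)).resolve_left
      s_ne_zero
  have eL : a01 + 3 / 5 * a03 + a21 - a11 - 2 / 5 * c = 0 :=
    (mul_eq_zero.1 (by linarith : s * (a01 + 3 / 5 * a03 + a21 - a11 - 2 / 5 * c) = 0)).resolve_left
      s_ne_zero
  obtain rfl : a20 = 0 := by linarith
  obtain rfl : a21 = 0 := by linarith
  obtain rfl : a02 = 0 := by linarith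
  obtain rfl : a12 = 0 := by linarith
  obtain rfl : a00 = 0 := by linarith
  obtain rfl : a11 = 0 := by linarith
  obtain rfl : c = 0 := by linarith
  obtain rfl : a30 = 0 := by linarith
  obtain rfl : a10 = 0 := by linarith
  obtain rfl : a03 = 0 := by linarith
  obtain rfl : a01 = 0 := by linarith
  simp [cubic]

/-- Existence: the coefficients are those obtained by solving the decoupled system. -/
lemma exists_interpolant (v : Fin 12 → ℝ)
    (hv : 4 * (v 1 + v 7) - 5 * (v 0 + v 2 + v 6 + v 8)
        = 4 * (v 4 + v 10) - 5 * (v 3 + v 5 + v 9 + v 11)) :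
    ∃ a00 a10 a01 a20 a11 a02 a30 a21 a12 a03 c : ℝ,
      ∀ j : Fin 12, eval ![(g j).1, (g j).2] (cubic a00 a10 a01 a20 a11 a02 a30 a21 a12 a03
        + C c * (X 0 ^ 3 * X 1 - X 0 * X 1 ^ 3)) = v j := by
  -- The slopes along the bottom, top, right and left edges.
  obtain ⟨B, hB⟩ : ∃ B, s * B = (v 2 - v 0) / 2 := ⟨_, mul_div_cancel₀ _ s_ne_zero⟩
  obtain ⟨T, hT⟩ : ∃ T, s * T = (v 6 - v 8) / 2 := ⟨_, mul_div_cancel₀ _ s_ne_zero⟩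
  obtain ⟨R, hR⟩ : ∃ R, s * R = (v 5 - v 3) / 2 := ⟨_, mul_div_cancel₀ _ s_ne_zero⟩
  obtain ⟨L, hL⟩ : ∃ L, s * L = (v 9 - v 11) / 2 := ⟨_, mul_div_cancel₀ _ s_ne_zero⟩
  obtain ⟨a20, h20⟩ : ∃ a, a = 5 / 12 * (v 6 + v 8 - 2 * v 7 + (v 0 + v 2 - 2 * v 1)) := ⟨_, rfl⟩
  obtain ⟨a21, h21⟩ : ∃ a, a = 5 / 12 * (v 6 + v 8 - 2 * v 7 - (v 0 + v 2 - 2 * v 1)) := ⟨_, rfl⟩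
  obtain ⟨a02, h02⟩ : ∃ a, a = 5 / 12 * (v 3 + v 5 - 2 * v 4 + (v 9 + v 11 - 2 * v 10)) := ⟨_, rfl⟩
  obtain ⟨a12, h12⟩ : ∃ a, a = 5 / 12 * (v 3 + v 5 - 2 * v 4 - (v 9 + v 11 - 2 * v 10)) := ⟨_, rfl⟩
  obtain ⟨a00, h00⟩ : ∃ a, a = (v 1 + v 7) / 2 - a02 := ⟨_, rfl⟩
  obtain ⟨a11, h11⟩ : ∃ a, a = (T - B + (R - L)) / 4 := ⟨_, rfl⟩
  obtain ⟨c, hc⟩ : ∃ a, a = 5 / 8 * (R - L - (T - B)) := ⟨_, rfl⟩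
  obtain ⟨a30, h30⟩ : ∃ a, a = 5 / 2 * ((v 4 - v 10) / 2 - ((B + T) / 2 - a12)) := ⟨_, rfl⟩
  obtain ⟨a10, h10⟩ : ∃ a, a = (v 4 - v 10) / 2 - a30 := ⟨_, rfl⟩
  obtain ⟨a03, h03⟩ : ∃ a, a = 5 / 2 * ((v 7 - v 1) / 2 - ((R + L) / 2 - a21)) := ⟨_, rfl⟩
  obtain ⟨a01, h01⟩ : ∃ a, a = (v 7 - v 1) / 2 - a03 := ⟨_, rfl⟩
  refine ⟨a00, a10, a01, a20, a11, a02, a30, a21, a12, a03, c, fun j => ?_⟩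
  -- The four slope equations, multiplied by `s`.
  have eB : s * (a10 + 3 / 5 * a30 + a12 - a11 + 2 / 5 * c) = (v 2 - v 0) / 2 := by
    rw [← hB]; congr 1; linarith
  have eT : s * (a10 + 3 / 5 * a30 + a12 + a11 - 2 / 5 * c) = (v 6 - v 8) / 2 := by
    rw [← hT]; congr 1; linarith
  have eR : s * (a01 + 3 / 5 * a03 + a21 + a11 + 2 / 5 * c) = (v 5 - v 3) / 2 := by
    rw [← hR]; congr 1; linarith
  have eL : s * (a01 + 3 / 5 * a03 + a21 - a11 - 2 / 5 * c) = (v 9 - v 11) / 2 := by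
    rw [← hL]; congr 1; linarith
  clear hB hT hR hL h11 hc h30 h03
  rw [eval_cubic_add]
  fin_cases j <;> simp [g] <;> ring_nf <;> (try simp only [s_cube, s_sq]) <;> linarith

/-- Proposition 2.4: given twelve reals `v₁,…,v₁₂` satisfying the compatibility relation,
there is exactly one `φ ∈ P̂ = P₃ ⊕ span{x³y - xy³}` with `φ(gⱼ) = vⱼ` for all `j`. -/
theorem unisolvency_with_relation (v : Fin 12 → ℝ)
    (hv : 4 * (v 1 + v 7) - 5 * (v 0 + v 2 + v 6 + v 8)
        = 4 * (v 4 + v 10) - 5 * (v 3 + v 5 + v 9 + v 11)) :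
    ∃! φ : MvPolynomial (Fin 2) ℝ,
      (∃ (p : MvPolynomial (Fin 2) ℝ) (c : ℝ), p.totalDegree ≤ 3 ∧
        φ = p + C c * (X 0 ^ 3 * X 1 - X 0 * X 1 ^ 3)) ∧
      ∀ j : Fin 12, eval ![(g j).1, (g j).2] φ = v j := by
  obtain ⟨a00, a10, a01, a20, a11, a02, a30, a21, a12, a03, c, h⟩ := exists_interpolant v hv
  refine existsUnique_of_exists_of_unique
    ⟨_, ⟨_, c, totalDegree_cubic_le a00 a10 a01 a20 a11 a02 a30 a21 a12 a03, rfl⟩, h⟩ ?_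
  rintro _ _ ⟨⟨p, c, hp, rfl⟩, h⟩ ⟨⟨q, d, hq, rfl⟩, h'⟩
  obtain ⟨a00, a10, a01, a20, a11, a02, a30, a21, a12, a03, hpq⟩ :=
    exists_eq_cubic (p - q) ((totalDegree_sub p q).trans (max_le hp hq))
  have hdiff : (p + C c * (X 0 ^ 3 * X 1 - X 0 * X 1 ^ 3))
      - (q + C d * (X 0 ^ 3 * X 1 - X 0 * X 1 ^ 3))
      = cubic a00 a10 a01 a20 a11 a02 a30 a21 a12 a03
        + C (c - d) * (X 0 ^ 3 * X 1 - X 0 * X 1 ^ 3) := by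
    rw [← hpq, C_sub]
    ring
  rw [← sub_eq_zero, hdiff]
  refine coeffs_eq_zero _ _ _ _ _ _ _ _ _ _ _ fun j => ?_
  rw [← hdiff, map_sub, h j, h' j, sub_self]
end

section
/- There exists exactly one φ in the space P̂ = P₃ ⊕ span{x³y − xy³} whose values at the twelve Gauss points of [−1,1]² are: φ(g₁) = φ(g₁₂) = 1 (the two Gauss points nearest the vertex (−1,−1)) and φ(gⱼ) = 0 for all other j ∈ {2,…,11}. -/
/-!
A polynomial of `P̂` restricts on each edge to a univariate cubic, and the Gauss nodes on that edge
are the roots `0, ±√(3/5)` of the Legendre polynomial `t³ - (3/5) t`. Hence an element of `P̂`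
vanishing at all twelve Gauss points restricts on each edge to a multiple of `t³ - (3/5) t`
(`cubic_vanishing`). Written out for the four edges this is a rational linear system in the eleven
coefficients whose only solution is zero (`eq_zero_of_vanishing`); here it matters that the quartic
term is `x³y - xy³`, since `x³y + xy³` would admit a nonzero solution. This gives uniqueness.

For existence a solution is written down. The data are symmetric under `x ↔ y` whereas
`x³y - xy³` is antisymmetric, so `c = 0` and the solution is a symmetric cubic; matching its edge
traces with the data, modulo multiples of `t³ - (3/5) t`, determines its coefficients.
-/

open MvPolynomial

/-- A univariate cubic vanishing at the three Gauss nodes is a multiple of `t³ - (3/5) t`. -/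
lemma cubic_vanishing {b₀ b₁ b₂ b₃ : ℝ} (h0 : b₀ = 0)
    (hp : b₀ + b₁ * s + b₂ * s ^ 2 + b₃ * s ^ 3 = 0)
    (hm : b₀ + b₁ * (-s) + b₂ * (-s) ^ 2 + b₃ * (-s) ^ 3 = 0) :
    b₂ = 0 ∧ b₁ + 3 / 5 * b₃ = 0 := by
  constructor
  · linear_combination (5 / 6) * (hp + hm) - (5 / 3) * h0 - (5 / 3) * b₂ * s_sq
  · apply mul_left_cancel₀ s_ne_zero
    linear_combination (hp - hm) / 2 - b₃ * s * s_sq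

/-- A bivariate polynomial of total degree at most `3` is the sum of its ten monomials. -/
lemma exists_cubic_form (p : MvPolynomial (Fin 2) ℝ) (hp : p.totalDegree ≤ 3) :
    ∃ a : ℕ → ℕ → ℝ, p =
      C (a 0 0) + C (a 1 0) * X 0 + C (a 0 1) * X 1
      + C (a 2 0) * X 0 ^ 2 + C (a 1 1) * (X 0 * X 1) + C (a 0 2) * X 1 ^ 2
      + C (a 3 0) * X 0 ^ 3 + C (a 2 1) * (X 0 ^ 2 * X 1)
      + C (a 1 2) * (X 0 * X 1 ^ 2) + C (a 0 3) * X 1 ^ 3 := by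
  let e : ℕ × ℕ → (Fin 2 →₀ ℕ) := fun ij => Finsupp.single 0 ij.1 + Finsupp.single 1 ij.2
  have he : Function.Injective e := by
    intro u v h
    have h0 := DFunLike.congr_fun h 0
    have h1 := DFunLike.congr_fun h 1
    simp [e] at h0 h1
    exact Prod.ext h0 h1
  let I : Finset (ℕ × ℕ) :=
    {(0, 0), (1, 0), (0, 1), (2, 0), (1, 1), (0, 2), (3, 0), (2, 1), (1, 2), (0, 3)}
  have hsub : p.support ⊆ I.image e := by
    intro m hm
    have hd := (le_totalDegree hm).trans hp
    rw [Finsupp.sum_fintype _ _ (by simp), Fin.sum_univ_two] at hd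
    refine Finset.mem_image.2 ⟨(m 0, m 1), ?_, ?_⟩
    · simp only [I, Finset.mem_insert, Finset.mem_singleton, Prod.mk.injEq]
      omega
    · ext i
      fin_cases i <;> simp [e]
  have hmon : ∀ (i j : ℕ) (r : ℝ), monomial (e (i, j)) r = C r * (X 0 ^ i * X 1 ^ j) := by
    intro i j r
    simp only [e, X_pow_eq_monomial, monomial_mul, C_mul_monomial, mul_one]
  refine ⟨fun i j => coeff (e (i, j)) p, ?_⟩
  have hsum : p = ∑ ij ∈ I, monomial (e ij) (coeff (e ij) p) := by
    conv_lhs => rw [p.as_sum]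
    rw [Finset.sum_subset hsub, Finset.sum_image he.injOn]
    intro m _ hm
    rw [notMem_support_iff.1 hm, map_zero]
  conv_lhs => rw [hsum]
  simp [I, hmon]
  ring

/-- Unisolvence: the only element of `P̂` vanishing at all twelve Gauss points is zero. -/
lemma eq_zero_of_vanishing (p : MvPolynomial (Fin 2) ℝ) (c : ℝ) (hp : p.totalDegree ≤ 3)
    (h : ∀ j : Fin 12, eval ![(g j).1, (g j).2]
      (p + C c * (X 0 ^ 3 * X 1 - X 0 * X 1 ^ 3)) = 0) :
    p + C c * (X 0 ^ 3 * X 1 - X 0 * X 1 ^ 3) = 0 := by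
  obtain ⟨a, rfl⟩ := exists_cubic_form p hp
  simp only [Fin.forall_fin_succ, map_add, map_sub, map_mul, map_pow, eval_C, eval_X] at h
  simp [g] at h
  obtain ⟨h1, h2, h3, h4, h5, h6, h7, h8, h9, h10, h11, h12⟩ := h
  have hB := cubic_vanishing (b₀ := a 0 0 - a 0 1 + a 0 2 - a 0 3)
    (b₁ := a 1 0 - a 1 1 + a 1 2 + c) (b₂ := a 2 0 - a 2 1) (b₃ := a 3 0 - c)
    (by linear_combination h2) (by linear_combination h3) (by linear_combination h1)
  have hR := cubic_vanishing (b₀ := a 0 0 + a 1 0 + a 2 0 + a 3 0)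
    (b₁ := a 0 1 + a 1 1 + a 2 1 + c) (b₂ := a 0 2 + a 1 2) (b₃ := a 0 3 - c)
    (by linear_combination h5) (by linear_combination h6) (by linear_combination h4)
  have hT := cubic_vanishing (b₀ := a 0 0 + a 0 1 + a 0 2 + a 0 3)
    (b₁ := a 1 0 + a 1 1 + a 1 2 - c) (b₂ := a 2 0 + a 2 1) (b₃ := a 3 0 + c)
    (by linear_combination h8) (by linear_combination h7) (by linear_combination h9)
  have hL := cubic_vanishing (b₀ := a 0 0 - a 1 0 + a 2 0 - a 3 0)
    (b₁ := a 0 1 - a 1 1 + a 2 1 - c) (b₂ := a 0 2 - a 1 2) (b₃ := a 0 3 + c)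
    (by linear_combination h11) (by linear_combination h10) (by linear_combination h12)
  obtain ⟨hB2, hB1⟩ := hB
  obtain ⟨hR2, hR1⟩ := hR
  obtain ⟨hT2, hT1⟩ := hT
  obtain ⟨hL2, hL1⟩ := hL
  have c20 : a 2 0 = 0 := by linarith
  have c21 : a 2 1 = 0 := by linarith
  have c02 : a 0 2 = 0 := by linarith
  have c12 : a 1 2 = 0 := by linarith
  have c00 : a 0 0 = 0 := by linarith
  have c30 : a 3 0 = 0 := by linarith
  have c10 : a 1 0 = 0 := by linarith
  have c03 : a 0 3 = 0 := by linarith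
  have c01 : a 0 1 = 0 := by linarith
  have cc : c = 0 := by linarith
  have c11 : a 1 1 = 0 := by linarith
  simp [c20, c21, c02, c12, c00, c30, c10, c03, c01, c11, cc]

/-- The vertex basis function, a cubic symmetric in `x` and `y`. -/
noncomputable def vertexFun : MvPolynomial (Fin 2) ℝ :=
  C (-5 / 12) + C (25 / 24 * (1 - s)) * (X 0 + X 1) + C (5 / 12 * s) * (X 0 * X 1)
  + C (5 / 12) * (X 0 ^ 2 + X 1 ^ 2) + C (-5 / 12) * (X 0 * X 1 ^ 2 + X 0 ^ 2 * X 1)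
  + C (-(25 / 24 * (1 - s))) * (X 0 ^ 3 + X 1 ^ 3)

lemma totalDegree_vertexFun : vertexFun.totalDegree ≤ 3 := by
  have hC : ∀ r : ℝ, (C r : MvPolynomial (Fin 2) ℝ).totalDegree ≤ 0 := fun r => by simp
  have hX : ∀ (i : Fin 2) (n : ℕ), (X i ^ n : MvPolynomial (Fin 2) ℝ).totalDegree ≤ n :=
    fun i n => by simp
  have hX1 : ∀ i : Fin 2, (X i : MvPolynomial (Fin 2) ℝ).totalDegree ≤ 1 := fun i => by simp
  have hadd : ∀ {p q : MvPolynomial (Fin 2) ℝ}, p.totalDegree ≤ 3 → q.totalDegree ≤ 3 →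
      (p + q).totalDegree ≤ 3 := fun h₁ h₂ => (totalDegree_add _ _).trans (max_le h₁ h₂)
  have hmul : ∀ {p q : MvPolynomial (Fin 2) ℝ} {m n : ℕ}, p.totalDegree ≤ m →
      q.totalDegree ≤ n → (p * q).totalDegree ≤ m + n :=
    fun h₁ h₂ => (totalDegree_mul _ _).trans (add_le_add h₁ h₂)
  have hCmul : ∀ (r : ℝ) {q : MvPolynomial (Fin 2) ℝ}, q.totalDegree ≤ 3 →
      (C r * q).totalDegree ≤ 3 := fun r q h => (hmul (hC r) h).trans (by norm_num)
  unfold vertexFun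
  refine hadd (hadd (hadd (hadd (hadd ((hC _).trans (by norm_num)) (hCmul _ (hadd ?_ ?_)))
    (hCmul _ ?_)) (hCmul _ (hadd ?_ ?_))) (hCmul _ (hadd ?_ ?_))) (hCmul _ (hadd ?_ ?_))
  · exact (hX1 0).trans (by norm_num)
  · exact (hX1 1).trans (by norm_num)
  · exact (hmul (hX1 0) (hX1 1)).trans (by norm_num)
  · exact (hX 0 2).trans (by norm_num)
  · exact (hX 1 2).trans (by norm_num)
  · exact hmul (hX1 0) (hX 1 2)
  · exact hmul (hX 0 2) (hX1 1)
  · exact hX 0 3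
  · exact hX 1 3

lemma eval_vertexFun (x y : ℝ) : eval ![x, y] vertexFun =
    -5 / 12 + 25 / 24 * (1 - s) * (x + y) + 5 / 12 * s * (x * y) + 5 / 12 * (x ^ 2 + y ^ 2)
      - 5 / 12 * (x * y ^ 2 + x ^ 2 * y) - 25 / 24 * (1 - s) * (x ^ 3 + y ^ 3) := by
  simp only [vertexFun, map_add, map_mul, map_pow, eval_C, eval_X, Matrix.cons_val_zero,
    Matrix.cons_val_one]
  ring

lemma eval_vertexFun_gauss (j : Fin 12) :
    eval ![(g j).1, (g j).2] vertexFun = if j = 0 ∨ j = 11 then 1 else 0 := by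
  have s3 : s ^ 3 = 3 / 5 * s := by linear_combination s * s_sq
  have s4 : s ^ 4 = 9 / 25 := by linear_combination (s ^ 2 + 3 / 5) * s_sq
  rw [eval_vertexFun]
  fin_cases j <;> simp [g] <;> ring_nf <;> simp only [s4, s3, s_sq] <;> ring

/-- Existence and uniqueness of the vertex-based basis function `φ₁^V`: the unique
`φ ∈ P̂ = P₃ ⊕ span{x³y - xy³}` with value 1 at the two Gauss points `g₁, g₁₂` nearest
the vertex `(-1,-1)` and 0 at the other ten Gauss points. -/
theorem vertex_basis_function :
    ∃! φ : MvPolynomial (Fin 2) ℝ,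
      (∃ (p : MvPolynomial (Fin 2) ℝ) (c : ℝ), p.totalDegree ≤ 3 ∧
        φ = p + C c * (X 0 ^ 3 * X 1 - X 0 * X 1 ^ 3)) ∧
      eval ![(g 0).1, (g 0).2] φ = 1 ∧
      eval ![(g 11).1, (g 11).2] φ = 1 ∧
      ∀ j : Fin 12, j ≠ 0 → j ≠ 11 → eval ![(g j).1, (g j).2] φ = 0 := by
  refine ⟨vertexFun, ⟨⟨vertexFun, 0, totalDegree_vertexFun, by simp⟩, ?_, ?_, ?_⟩, ?_⟩
  · simp [eval_vertexFun_gauss]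
  · simp [eval_vertexFun_gauss]
  · intro j h0 h11
    simp [eval_vertexFun_gauss, h0, h11]
  · rintro φ ⟨⟨p, c, hp, rfl⟩, h1, h12, hj⟩
    -- The difference of two solutions lies in `P̂` and vanishes at all Gauss points.
    have hdiff : p + C c * (X 0 ^ 3 * X 1 - X 0 * X 1 ^ 3) - vertexFun
        = (p - vertexFun) + C c * (X 0 ^ 3 * X 1 - X 0 * X 1 ^ 3) := by ring
    rw [← sub_eq_zero, hdiff]
    refine eq_zero_of_vanishing _ c
      ((totalDegree_sub _ _).trans (max_le hp totalDegree_vertexFun)) fun j => ?_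
    rw [← hdiff, map_sub, sub_eq_zero, eval_vertexFun_gauss]
    split_ifs with hv
    · rcases hv with rfl | rfl
      · exact h1
      · exact h12
    · rw [not_or] at hv
      exact hj j hv.1 hv.2
end
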